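/- Let d ∈ ℕ. For every θ ∈ [0,1] and all nonnegative functions f, g ∈ L^1(ℝ^d), one has ‖I^θ(f,g)‖_{L^{1/2}(ℝ^d)} ≤ 3^d 5^{2d} ‖f‖_{L^1(ℝ^d)} ‖g‖_{L^1(ℝ^d)}, i.e., (∫_{ℝ^d} I^θ(f,g)(x)^{1/2} dx)² ≤ 3^d 5^{2d} ‖f‖_{L^1} ‖g‖_{L^1}. -/

import Mathlib

open MeasureTheory ENNReal

/-- The bilinear operator `I^θ(f,g)(x) = ∫_{|y| ≤ 1} f(x + (θ−1)y) g(x + θy) dy`. -/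
noncomputable def Ib (d : ℕ) (θ : ℝ)
    (f g : EuclideanSpace ℝ (Fin d) → ℝ≥0∞) (x : EuclideanSpace ℝ (Fin d)) : ℝ≥0∞ :=
  ∫⁻ y in {y : EuclideanSpace ℝ (Fin d) | ‖y‖ ≤ 1},
    f (x + (θ - 1) • y) * g (x + θ • y)

/-!
Cauchy–Schwarz on a ball `B(z, 1)` bounds the integral of `(I^θ)^(1/2)` there by the square root of
`μ B(z, 1) * ∫_{B(z, 1)} I^θ`. The operator only moves points by at most `1`, so
`∫_{B(z, 1)} I^θ(f, g)` sees `f` and `g` on `B(z, 2)` only, and it is at most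
`(∫_{B(z, 2)} f) (∫_{B(z, 2)} g)` because `(x, y) ↦ (x + (θ - 1) y, x + θ y)` preserves measure.
Averaging over the centre `z`, with a second use of Cauchy–Schwarz, makes the local bounds global
and gives the constant `μ(B(0, 2))² / μ(B(0, 1)) = 4^d μ(B(0, 1))`.
-/

open Metric Module

lemma rpow_half_sq (t : ℝ≥0∞) : (t ^ ((1 : ℝ) / 2)) ^ 2 = t := by
  simpa using ENNReal.rpow_inv_natCast_pow two_ne_zero t

lemma setLIntegral_rpow_half_le {α : Type*} [MeasurableSpace α] {μ : Measure α} {h : α → ℝ≥0∞}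
    (hh : AEMeasurable h μ) (s : Set α) :
    ∫⁻ x in s, h x ^ ((1 : ℝ) / 2) ∂μ ≤
      μ s ^ ((1 : ℝ) / 2) * (∫⁻ x in s, h x ∂μ) ^ ((1 : ℝ) / 2) := by
  simpa using lintegral_mul_norm_pow_le (aemeasurable_const (b := (1 : ℝ≥0∞))) hh.restrict
    one_half_pos.le one_half_pos.le (add_halves (1 : ℝ))

section BallIntegrals

variable {X : Type*} [PseudoMetricSpace X] [SecondCountableTopology X] [MeasurableSpace X]
  [OpensMeasurableSpace X] {h : X → ℝ≥0∞}

lemma measurable_indicator_closedBall_prod (hh : Measurable h) (r : ℝ) :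
    Measurable fun p : X × X ↦ (closedBall p.1 r).indicator h p.2 :=
  (hh.comp measurable_snd).indicator
    (measurableSet_le (measurable_snd.dist measurable_fst) measurable_const)

lemma measurable_setLIntegral_closedBall (μ : Measure X) [SFinite μ] (hh : Measurable h) (r : ℝ) :
    Measurable fun z ↦ ∫⁻ x in closedBall z r, h x ∂μ := by
  simp_rw [← lintegral_indicator measurableSet_closedBall]
  exact (measurable_indicator_closedBall_prod hh r).lintegral_prod_right'

lemma lintegral_setLIntegral_closedBall (μ ν : Measure X) [SFinite μ] [SFinite ν]
    (hh : Measurable h) (r : ℝ) :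
    ∫⁻ z, ∫⁻ x in closedBall z r, h x ∂μ ∂ν = ∫⁻ x, ν (closedBall x r) * h x ∂μ := by
  have indicator_comm (z x : X) :
      (closedBall z r).indicator h x = (closedBall x r).indicator (fun _ ↦ h x) z := by
    classical simp only [Set.indicator_apply, mem_closedBall, dist_comm]
  simp_rw [← lintegral_indicator measurableSet_closedBall]
  rw [lintegral_lintegral_swap (measurable_indicator_closedBall_prod hh r).aemeasurable]
  simp_rw [indicator_comm, lintegral_indicator_const measurableSet_closedBall, mul_comm]

end BallIntegrals

section LocalToGlobal

variable {E : Type*} [NormedAddCommGroup E] [ProperSpace E] [MeasurableSpace E]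
  [BorelSpace E] (μ : Measure E) [μ.IsAddHaarMeasure]

lemma lintegral_setLIntegral_closedBall_eq_mul {h : E → ℝ≥0∞} (hh : Measurable h) (r : ℝ) :
    ∫⁻ z, ∫⁻ x in closedBall z r, h x ∂μ ∂μ = μ (closedBall 0 r) * ∫⁻ x, h x ∂μ := by
  simp_rw [lintegral_setLIntegral_closedBall μ μ hh r, Measure.addHaar_closedBall_center μ _ r]
  exact lintegral_const_mul _ hh

lemma measure_closedBall_mul_sq_lintegral_rpow_half_le {f g h : E → ℝ≥0∞} (hf : Measurable f)
    (hg : Measurable g) (hh : Measurable h) {r R : ℝ} (hr : 0 < r)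
    (hloc : ∀ z, ∫⁻ x in closedBall z r, h x ∂μ ≤
      (∫⁻ x in closedBall z R, f x ∂μ) * ∫⁻ x in closedBall z R, g x ∂μ) :
    μ (closedBall 0 r) * (∫⁻ x, h x ^ ((1 : ℝ) / 2) ∂μ) ^ 2 ≤
      μ (closedBall 0 R) ^ 2 * (∫⁻ x, f x ∂μ) * ∫⁻ x, g x ∂μ := by
  set m := μ (closedBall 0 r)
  have hm (z : E) : μ (closedBall z r) = m := Measure.addHaar_closedBall_center μ z r
  have hm_zero : m ≠ 0 := (measure_closedBall_pos μ 0 hr).ne'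
  have hm_top : m ≠ ∞ := measure_closedBall_lt_top.ne
  have averaged : m * ∫⁻ x, h x ^ ((1 : ℝ) / 2) ∂μ ≤ m ^ ((1 : ℝ) / 2) *
      ((μ (closedBall 0 R) * ∫⁻ x, f x ∂μ) ^ ((1 : ℝ) / 2) *
        (μ (closedBall 0 R) * ∫⁻ x, g x ∂μ) ^ ((1 : ℝ) / 2)) := by
    calc m * ∫⁻ x, h x ^ ((1 : ℝ) / 2) ∂μ
        = ∫⁻ z, ∫⁻ x in closedBall z r, h x ^ ((1 : ℝ) / 2) ∂μ ∂μ :=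
          (lintegral_setLIntegral_closedBall_eq_mul μ (hh.pow_const _) r).symm
      _ ≤ ∫⁻ z, m ^ ((1 : ℝ) / 2) * ((∫⁻ x in closedBall z R, f x ∂μ) ^ ((1 : ℝ) / 2) *
            (∫⁻ x in closedBall z R, g x ∂μ) ^ ((1 : ℝ) / 2)) ∂μ := by
          refine lintegral_mono fun z ↦ (setLIntegral_rpow_half_le hh.aemeasurable _).trans ?_
          grw [hm, hloc z, mul_rpow_of_nonneg _ _ one_half_pos.le]
      _ = m ^ ((1 : ℝ) / 2) * ∫⁻ z, (∫⁻ x in closedBall z R, f x ∂μ) ^ ((1 : ℝ) / 2) *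
            (∫⁻ x in closedBall z R, g x ∂μ) ^ ((1 : ℝ) / 2) ∂μ :=
          lintegral_const_mul' _ _ (rpow_ne_top_of_nonneg one_half_pos.le hm_top)
      _ ≤ _ := by
          rw [← lintegral_setLIntegral_closedBall_eq_mul μ hf,
            ← lintegral_setLIntegral_closedBall_eq_mul μ hg]
          gcongr
          exact lintegral_mul_norm_pow_le
            (measurable_setLIntegral_closedBall μ hf R).aemeasurable
            (measurable_setLIntegral_closedBall μ hg R).aemeasurable
            one_half_pos.le one_half_pos.le (add_halves 1)
  have squared := pow_le_pow_left' averaged 2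
  simp only [mul_pow, rpow_half_sq] at squared
  rw [← ENNReal.mul_le_mul_iff_right hm_zero hm_top]
  convert! squared using 1 <;> ring

end LocalToGlobal

section BilinearAverage

lemma lintegral_lintegral_mul_shear {R E : Type*} [Ring R] [AddCommGroup E] [Module R E]
    [MeasurableSpace E] [MeasurableAdd₂ E] [MeasurableConstSMul R E] (μ : Measure E) [SFinite μ]
    [μ.IsAddLeftInvariant] (θ : R) {f g : E → ℝ≥0∞} (hf : Measurable f) (hg : Measurable g) :
    ∫⁻ x, ∫⁻ y, f (x + (θ - 1) • y) * g (x + θ • y) ∂μ ∂μ = (∫⁻ x, f x ∂μ) * ∫⁻ x, g x ∂μ := by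
  have shift (y : E) :
      ∫⁻ x, f (x + (θ - 1) • y) * g (x + θ • y) ∂μ = ∫⁻ x, f x * g (x + y) ∂μ := by
    rw [← lintegral_add_right_eq_self (fun x ↦ f x * g (x + y)) ((θ - 1) • y)]
    refine lintegral_congr fun x ↦ ?_
    rw [sub_smul, one_smul, add_assoc, sub_add_cancel]
  calc ∫⁻ x, ∫⁻ y, f (x + (θ - 1) • y) * g (x + θ • y) ∂μ ∂μ
      = ∫⁻ y, ∫⁻ x, f (x + (θ - 1) • y) * g (x + θ • y) ∂μ ∂μ :=
        lintegral_lintegral_swap (by fun_prop)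
    _ = ∫⁻ y, ∫⁻ x, f x * g (x + y) ∂μ ∂μ := lintegral_congr shift
    _ = ∫⁻ x, ∫⁻ y, f x * g (x + y) ∂μ ∂μ := lintegral_lintegral_swap (by fun_prop)
    _ = ∫⁻ x, f x * ∫⁻ y, g y ∂μ ∂μ := lintegral_congr fun x ↦ by
        rw [lintegral_const_mul _ (by fun_prop), lintegral_add_left_eq_self g x]
    _ = (∫⁻ x, f x ∂μ) * ∫⁻ x, g x ∂μ := lintegral_mul_const _ hf

lemma add_smul_mem_closedBall {E : Type*} [SeminormedAddCommGroup E] [NormedSpace ℝ E] {c r : ℝ}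
    {x y z : E} (hx : x ∈ closedBall z r) (hc : |c| ≤ 1) (hy : ‖y‖ ≤ 1) :
    x + c • y ∈ closedBall z (r + 1) := by
  have hcy : ‖c • y‖ ≤ 1 := by
    simpa only [norm_smul, Real.norm_eq_abs] using mul_le_one₀ hc (norm_nonneg y) hy
  rw [mem_closedBall_iff_norm] at hx ⊢
  calc ‖x + c • y - z‖ = ‖(x - z) + c • y‖ := by rw [add_sub_right_comm]
    _ ≤ r + 1 := norm_add_le_of_le hx hcy

variable {E : Type*} [NormedAddCommGroup E] [NormedSpace ℝ E] [MeasurableSpace E]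

/-- The operator `I^θ` on a normed space `E` with a reference measure `μ`. For Lebesgue measure on
`EuclideanSpace ℝ (Fin d)` it is definitionally `Ib d θ`. -/
noncomputable def bilinearAverage (μ : Measure E) (θ : ℝ) (f g : E → ℝ≥0∞) (x : E) : ℝ≥0∞ :=
  ∫⁻ y in {y : E | ‖y‖ ≤ 1}, f (x + (θ - 1) • y) * g (x + θ • y) ∂μ

variable [BorelSpace E] [SecondCountableTopology E] (μ : Measure E) {f g : E → ℝ≥0∞}

lemma measurable_bilinearAverage [SFinite μ] (θ : ℝ) (hf : Measurable f) (hg : Measurable g) :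
    Measurable (bilinearAverage μ θ f g) :=
  Measurable.lintegral_prod_right'
    (f := fun p : E × E ↦ f (p.1 + (θ - 1) • p.2) * g (p.1 + θ • p.2)) (by fun_prop)

lemma setLIntegral_closedBall_bilinearAverage_le [SFinite μ] [μ.IsAddLeftInvariant] {θ : ℝ}
    (hθ : θ ∈ Set.Icc (0 : ℝ) 1) (hf : Measurable f) (hg : Measurable g) (z : E) (r : ℝ) :
    ∫⁻ x in closedBall z r, bilinearAverage μ θ f g x ∂μ ≤
      (∫⁻ x in closedBall z (r + 1), f x ∂μ) * ∫⁻ x in closedBall z (r + 1), g x ∂μ := by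
  have hθ_abs : |θ| ≤ 1 := abs_le.2 ⟨by linarith [hθ.1], hθ.2⟩
  have hθ_sub_abs : |θ - 1| ≤ 1 := abs_le.2 ⟨by linarith [hθ.1], by linarith [hθ.2]⟩
  set B := closedBall z (r + 1)
  have hB : MeasurableSet B := measurableSet_closedBall
  calc ∫⁻ x in closedBall z r, bilinearAverage μ θ f g x ∂μ
      ≤ ∫⁻ x in closedBall z r, bilinearAverage μ θ (B.indicator f) (B.indicator g) x ∂μ := by
        refine setLIntegral_mono' measurableSet_closedBall fun x hx ↦
          setLIntegral_mono' (measurableSet_le measurable_norm measurable_const) fun y hy ↦ ?_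
        rw [Set.indicator_of_mem (add_smul_mem_closedBall hx hθ_sub_abs hy),
          Set.indicator_of_mem (add_smul_mem_closedBall hx hθ_abs hy)]
    _ ≤ ∫⁻ x, ∫⁻ y, B.indicator f (x + (θ - 1) • y) * B.indicator g (x + θ • y) ∂μ ∂μ :=
        (setLIntegral_le_lintegral _ _).trans
          (lintegral_mono fun _ ↦ setLIntegral_le_lintegral _ _)
    _ = (∫⁻ x, B.indicator f x ∂μ) * ∫⁻ x, B.indicator g x ∂μ :=
        lintegral_lintegral_mul_shear μ θ (hf.indicator hB) (hg.indicator hB)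
    _ = (∫⁻ x in B, f x ∂μ) * ∫⁻ x in B, g x ∂μ := by
        rw [lintegral_indicator hB, lintegral_indicator hB]

end BilinearAverage

theorem stmt3_general {E : Type*} [NormedAddCommGroup E] [NormedSpace ℝ E] [FiniteDimensional ℝ E]
    [MeasurableSpace E] [BorelSpace E] (μ : Measure E) [μ.IsAddHaarMeasure] {θ : ℝ}
    (hθ : θ ∈ Set.Icc (0 : ℝ) 1) {f g : E → ℝ≥0∞} (hf : Measurable f) (hg : Measurable g) :
    (∫⁻ x, bilinearAverage μ θ f g x ^ ((1 : ℝ) / 2) ∂μ) ^ 2 ≤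
      4 ^ finrank ℝ E * μ (closedBall 0 1) * (∫⁻ x, f x ∂μ) * ∫⁻ x, g x ∂μ := by
  have : ProperSpace E := FiniteDimensional.proper_real E
  set m := μ (closedBall (0 : E) 1)
  have hm_zero : m ≠ 0 := (measure_closedBall_pos μ 0 one_pos).ne'
  have hm_top : m ≠ ∞ := measure_closedBall_lt_top.ne
  have doubling : μ (closedBall (0 : E) (1 + 1)) = 2 ^ finrank ℝ E * m := by
    rw [Measure.addHaar_closedBall' μ 0 (by norm_num), ofReal_pow (by norm_num)]
    norm_num [m]
  have global := measure_closedBall_mul_sq_lintegral_rpow_half_le μ hf hg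
    (measurable_bilinearAverage μ θ hf hg) one_pos
    fun z ↦ setLIntegral_closedBall_bilinearAverage_le μ hθ hf hg z 1
  rw [← ENNReal.mul_le_mul_iff_right hm_zero hm_top]
  calc m * (∫⁻ x, bilinearAverage μ θ f g x ^ ((1 : ℝ) / 2) ∂μ) ^ 2
      ≤ (2 ^ finrank ℝ E * m) ^ 2 * (∫⁻ x, f x ∂μ) * ∫⁻ x, g x ∂μ := by rwa [doubling] at global
    _ = m * (4 ^ finrank ℝ E * m * (∫⁻ x, f x ∂μ) * ∫⁻ x, g x ∂μ) := by
        rw [show (4 : ℝ≥0∞) = 2 ^ 2 by norm_num, pow_right_comm]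
        ring

lemma volume_euclidean_closedBall_le {ι : Type*} [Fintype ι] (x : EuclideanSpace ℝ ι) {r : ℝ}
    (hr : 0 ≤ r) : volume (closedBall x r) ≤ ENNReal.ofReal ((2 * r) ^ Fintype.card ι) := by
  have inscribed : closedBall x r ⊆ WithLp.ofLp ⁻¹' closedBall x.ofLp r := fun y hy ↦ by
    rw [Set.mem_preimage, mem_closedBall, dist_pi_le_iff hr]
    intro i
    simpa [dist_eq_norm] using (PiLp.norm_apply_le (y - x) i).trans (mem_closedBall_iff_norm.1 hy)
  calc volume (closedBall x r)
      ≤ volume (WithLp.ofLp ⁻¹' closedBall x.ofLp r) := measure_mono inscribed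
    _ = volume (closedBall x.ofLp r) := (PiLp.volume_preserving_ofLp ι).measure_preimage
        measurableSet_closedBall.nullMeasurableSet
    _ = ENNReal.ofReal ((2 * r) ^ Fintype.card ι) := Real.volume_pi_closedBall _ hr

lemma four_pow_mul_volume_closedBall_one_le (d : ℕ) :
    4 ^ d * volume (closedBall (0 : EuclideanSpace ℝ (Fin d)) 1) ≤ 3 ^ d * 5 ^ (2 * d) := by
  calc 4 ^ d * volume (closedBall (0 : EuclideanSpace ℝ (Fin d)) 1)
      ≤ 4 ^ d * 2 ^ d := by
        gcongr
        simpa [ofReal_pow] using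
          volume_euclidean_closedBall_le (0 : EuclideanSpace ℝ (Fin d)) zero_le_one
    _ = 8 ^ d := by rw [← mul_pow]; norm_num
    _ ≤ 75 ^ d := by gcongr; norm_num
    _ = 3 ^ d * 5 ^ (2 * d) := by rw [pow_mul, ← mul_pow]; norm_num

theorem stmt3 (d : ℕ) (θ : ℝ) (hθ : θ ∈ Set.Icc (0 : ℝ) 1)
    (f g : EuclideanSpace ℝ (Fin d) → ℝ≥0∞)
    (hf : Measurable f) (hg : Measurable g)
    (hf1 : (∫⁻ x, f x) < ∞) (hg1 : (∫⁻ x, g x) < ∞) :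
    (∫⁻ x, (Ib d θ f g x) ^ ((1 : ℝ) / 2)) ^ (2 : ℕ) ≤
      (3 ^ d * 5 ^ (2 * d) : ℝ≥0∞) * (∫⁻ x, f x) * (∫⁻ x, g x) := by
  refine (stmt3_general volume hθ hf hg).trans ?_
  grw [finrank_euclideanSpace_fin, four_pow_mul_volume_closedBall_one_le]
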